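/- arXiv:2512.12591 — 6 statements merged into one kernel-verified Lean document; each statement's English description precedes it below -/
import Mathlib

section
/- For every positive integer k, the Hamming bound for single-error correction is attained by a linear code: Ham(k,1) = N(k,1) = NL(k,1), where Ham(k,1) := min{ n ∈ ℕ : (n+1)·2^k ≤ 2^n }. -/
/-!
The three quantities are infima of one and the same set of lengths, because the conditions on `n`
imply each other cyclically.

* A `k`-dimensional linear code is a code with `2 ^ k` words whose distances are weights of
  differences (`exists_code_of_linear`).
* The radius-one balls around the words of a code of minimum distance `3` are disjoint and have
  `n + 1` points each, so `(n + 1) * 2 ^ k ≤ 2 ^ n` (`sphere_packing`).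
* If `(n + 1) * 2 ^ k ≤ 2 ^ n`, then `n ≤ 2 ^ (n - k) - 1`, so a parity-check map
  `F_2^n → F_2^(n-k)` can have distinct nonzero columns (a shortened Hamming code). Its kernel has
  dimension at least `k` and no nonzero word of weight `1` or `2`; any `k`-dimensional
  subspace of the kernel is the required code (`exists_linear_of_hamming`).
-/


/-- `N k e`: the minimal length `n` such that there exists a binary code
`C ⊆ F_2^n` with `|C| = 2^k` and minimum Hamming distance `≥ 2e+1`. -/
noncomputable def N (k e : ℕ) : ℕ :=
  sInf {n : ℕ | ∃ C : Finset (Fin n → ZMod 2), C.card = 2 ^ k ∧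
    ∀ u ∈ C, ∀ v ∈ C, u ≠ v → 2 * e + 1 ≤ hammingDist u v}

/-- `NL k e`: the minimal length `n` such that there exists a `k`-dimensional linear
subspace `C ⊆ F_2^n` with minimum Hamming distance `≥ 2e+1`. -/
noncomputable def NL (k e : ℕ) : ℕ :=
  sInf {n : ℕ | ∃ C : Submodule (ZMod 2) (Fin n → ZMod 2),
    Module.finrank (ZMod 2) C = k ∧ ∀ x ∈ C, x ≠ 0 → 2 * e + 1 ≤ hammingNorm x}

/-- `Ham1 k`: the Hamming bound for single-error correction, the smallest `n` with
`(n+1) * 2^k ≤ 2^n`. -/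
noncomputable def Ham1 (k : ℕ) : ℕ :=
  sInf {n : ℕ | (n + 1) * 2 ^ k ≤ 2 ^ n}

theorem exists_code_of_linear {k n : ℕ} (C : Submodule (ZMod 2) (Fin n → ZMod 2))
    (hC : Module.finrank (ZMod 2) C = k)
    (hd : ∀ x ∈ C, x ≠ 0 → 2 * 1 + 1 ≤ hammingNorm x) :
    ∃ C : Finset (Fin n → ZMod 2), C.card = 2 ^ k ∧
      ∀ u ∈ C, ∀ v ∈ C, u ≠ v → 2 * 1 + 1 ≤ hammingDist u v := by
  classical
  refine ⟨Finset.univ.filter (· ∈ C), ?_, ?_⟩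
  · have h := Module.card_eq_pow_finrank (K := ZMod 2) (V := C)
    rw [hC, ZMod.card] at h
    rw [← h, Fintype.card_subtype]
  · intro u hu v hv huv
    rw [hammingDist_eq_hammingNorm]
    simp only [Finset.mem_filter, Finset.mem_univ, true_and] at hu hv
    refine hd _ (C.add_mem (C.neg_mem hu) hv) fun h => huv ?_
    exact neg_add_eq_zero.mp h

/-- The points of the radius-one ball around `c`, indexed by `none` (no error) or by the position of the
flipped bit. -/
def ballPoint {n : ℕ} (c : Fin n → ZMod 2) : Option (Fin n) → Fin n → ZMod 2
  | none => c
  | some i => c + Pi.single i 1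

theorem hammingDist_ballPoint_le {n : ℕ} (c : Fin n → ZMod 2) (o : Option (Fin n)) :
    hammingDist c (ballPoint c o) ≤ 1 := by
  cases o with
  | none => simp [ballPoint]
  | some i =>
    unfold hammingDist
    refine (Finset.card_le_card (t := {i}) ?_).trans (by simp)
    intro j hj
    by_contra hji
    simp only [Finset.mem_singleton] at hji
    simp [ballPoint, hji] at hj

theorem ballPoint_injective {n : ℕ} (c : Fin n → ZMod 2) :
    Function.Injective (ballPoint c) := by
  rintro (_ | i) (_ | j) h
  · rfl
  · simp [ballPoint] at h
  · simp [ballPoint] at h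
  · have h' : (Pi.single i 1 : Fin n → ZMod 2) = Pi.single j 1 := add_left_cancel h
    by_contra hij
    have hij' : i ≠ j := fun e => hij (by rw [e])
    have := congrFun h' i
    simp [hij'] at this

theorem sphere_packing {k n : ℕ} (C : Finset (Fin n → ZMod 2)) (hC : C.card = 2 ^ k)
    (hd : ∀ u ∈ C, ∀ v ∈ C, u ≠ v → 2 * 1 + 1 ≤ hammingDist u v) :
    (n + 1) * 2 ^ k ≤ 2 ^ n := by
  have hinj : Function.Injective
      (fun p : C × Option (Fin n) => ballPoint (p.1 : Fin n → ZMod 2) p.2) := by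
    rintro ⟨⟨u, hu⟩, o⟩ ⟨⟨v, hv⟩, o'⟩ h
    change ballPoint u o = ballPoint v o' at h
    have huv : u = v := by
      by_contra hne
      have h1 := hammingDist_ballPoint_le u o
      have h2 := hammingDist_ballPoint_le v o'
      rw [← h, hammingDist_comm] at h2
      have h3 := hammingDist_triangle u (ballPoint u o) v
      have h4 := hd u hu v hv hne
      omega
    subst huv
    rw [ballPoint_injective u h]
  have h := Fintype.card_le_of_injective _ hinj
  simp only [Fintype.card_prod, Fintype.card_coe, hC, Fintype.card_option, Fintype.card_fin,
    Fintype.card_pi, ZMod.card, Finset.prod_const, Finset.card_univ] at h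
  linarith

/-- Independence of any two columns of the parity-check map rules out words of weight one or two
in its kernel. -/
theorem three_le_hammingNorm {n : ℕ} {V : Type*} [AddCommGroup V] [Module (ZMod 2) V]
    (f : Fin n → V) (hf : Function.Injective f) (hf0 : ∀ i, f i ≠ 0)
    (x : Fin n → ZMod 2) (hx : ∑ i, x i • f i = 0) (hx0 : x ≠ 0) :
    2 * 1 + 1 ≤ hammingNorm x := by
  classical
  have one_of : ∀ a : ZMod 2, a ≠ 0 → a = 1 := by decide
  have hs : ∑ i with x i ≠ 0, f i = 0 := by
    rw [← hx, Finset.sum_filter]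
    refine Finset.sum_congr rfl fun i _ => ?_
    by_cases h : x i = 0
    · simp [h]
    · simp [one_of _ h]
  by_contra hlt
  have hpos : hammingNorm x ≠ 0 := by simpa using hx0
  have hcases : hammingNorm x = 1 ∨ hammingNorm x = 2 := by omega
  unfold hammingNorm at hcases
  rcases hcases with h | h
  · obtain ⟨i, hi⟩ := Finset.card_eq_one.mp h
    rw [hi, Finset.sum_singleton] at hs
    exact hf0 i hs
  · obtain ⟨i, j, hij, he⟩ := Finset.card_eq_two.mp h
    rw [he, Finset.sum_pair hij] at hs
    -- In characteristic two, `f i + f j = 0` says `f i = f j`.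
    have hjj : f j + f j = 0 := by
      rw [← two_smul (ZMod 2) (f j), show (2 : ZMod 2) = 0 from rfl, zero_smul]
    exact hij (hf (add_right_cancel (hs.trans hjj.symm)))

theorem exists_linear_of_hamming {k n : ℕ} (h : (n + 1) * 2 ^ k ≤ 2 ^ n) :
    ∃ C : Submodule (ZMod 2) (Fin n → ZMod 2),
      Module.finrank (ZMod 2) C = k ∧ ∀ x ∈ C, x ≠ 0 → 2 * 1 + 1 ≤ hammingNorm x := by
  classical
  have hkn : k ≤ n := by
    have : 2 ^ k ≤ 2 ^ n := le_trans (Nat.le_mul_of_pos_left _ n.succ_pos) h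
    exact (Nat.pow_le_pow_iff_right (by norm_num)).mp this
  have hcols : n + 1 ≤ 2 ^ (n - k) := by
    have h2 : 2 ^ n = 2 ^ (n - k) * 2 ^ k := by rw [← pow_add, Nat.sub_add_cancel hkn]
    rw [h2] at h
    exact Nat.le_of_mul_le_mul_right h (by positivity)
  have hcard : Fintype.card (Fin n) ≤
      Fintype.card {v : Fin (n - k) → ZMod 2 // v ≠ 0} := by
    rw [Fintype.card_subtype_compl]
    simp
    omega
  obtain ⟨f⟩ := Function.Embedding.nonempty_of_card_le hcard
  let H : (Fin n → ZMod 2) →ₗ[ZMod 2] (Fin (n - k) → ZMod 2) :=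
    Fintype.linearCombination (ZMod 2) fun i => (f i).1
  have hker : k ≤ Module.finrank (ZMod 2) (LinearMap.ker H) := by
    have h1 := LinearMap.finrank_range_add_finrank_ker H
    have h2 := Submodule.finrank_le (LinearMap.range H)
    simp only [Module.finrank_fin_fun] at h1 h2
    omega
  obtain ⟨b, hb⟩ := exists_linearIndependent_of_le_finrank hker
  have hb' := hb.map' (LinearMap.ker H).subtype (Submodule.ker_subtype _)
  refine ⟨Submodule.span (ZMod 2) (Set.range ((LinearMap.ker H).subtype ∘ b)), ?_, ?_⟩
  · rw [finrank_span_eq_card hb', Fintype.card_fin]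
  · intro x hx hx0
    have hxH : x ∈ LinearMap.ker H := by
      refine Submodule.span_le.mpr ?_ hx
      rintro _ ⟨i, rfl⟩
      exact (b i).2
    refine three_le_hammingNorm (fun i => (f i).1)
      (Subtype.val_injective.comp f.injective) (fun i => (f i).2) x ?_ hx0
    simpa [H, Fintype.linearCombination_apply] using hxH

theorem hamming_bound_attained (k : ℕ) (hk : 0 < k) :
    Ham1 k = N k 1 ∧ N k 1 = NL k 1 := by
  have hN : Ham1 k = N k 1 := by
    refine congrArg sInf (Set.ext fun n => ⟨fun h => ?_, fun ⟨C, hC, hd⟩ => sphere_packing C hC hd⟩)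
    obtain ⟨C, hC, hd⟩ := exists_linear_of_hamming h
    exact exists_code_of_linear C hC hd
  refine ⟨hN, congrArg sInf (Set.ext fun n => ⟨fun ⟨C, hC, hd⟩ => ?_, fun ⟨C, hC, hd⟩ => ?_⟩)⟩
  · exact exists_linear_of_hamming (sphere_packing C hC hd)
  · exact exists_code_of_linear C hC hd
end

section
/- For every positive integer k, NL(k,1) = N(k,1) = k + 1 + ⌊log₂(k + 1 + ⌊log₂ k⌋)⌋. -/
/-- The Hamming (sphere-packing) bound for one error. -/
lemma hamming_bound {n : ℕ} (C : Finset (Fin n → ZMod 2))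
    (hC : ∀ u ∈ C, ∀ v ∈ C, u ≠ v → 3 ≤ hammingDist u v) :
    C.card * (n + 1) ≤ 2 ^ n := by
  classical
  -- The error patterns of weight at most one: none, or a flip of coordinate `i`.
  let err : Option (Fin n) → (Fin n → ZMod 2) := fun o => o.elim 0 (fun i => Pi.single i 1)
  have herr : ∀ o, hammingNorm (err o) ≤ 1 := by
    rintro (_ | i)
    · simp [err]
    · refine Finset.card_le_one.2 fun a ha b hb => ?_
      simp only [err, Option.elim, Finset.mem_filter, Finset.mem_univ, true_and, Pi.single_apply,
        ne_eq, ite_eq_right_iff, one_ne_zero, imp_false, not_not] at ha hb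
      rw [ha, hb]
  have hinj : Function.Injective err := by
    rintro (_ | i) (_ | j) h
    · rfl
    · have := congrFun h j
      simp [err] at this
    · have := congrFun h i
      simp [err] at this
    · have := congrFun h i
      by_cases hij : i = j
      · rw [hij]
      · simp [err, hij] at this
  have hcard := Finset.card_le_card_of_injOn (s := C ×ˢ (Finset.univ : Finset (Option (Fin n))))
    (t := (Finset.univ : Finset (Fin n → ZMod 2))) (fun p => p.1 + err p.2)
    (fun _ _ => Finset.mem_coe.2 (Finset.mem_univ _)) (by
      rintro ⟨u, a⟩ hu ⟨v, b⟩ hv h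
      simp only [Finset.coe_product, Set.mem_prod, Finset.mem_coe] at hu hv
      simp only at h
      have huv : u = v := by
        by_contra hne
        have h3 := hC u hu.1 v hv.1 hne
        have ht := hammingDist_triangle u (u + err a) v
        have h1 : hammingDist u (u + err a) ≤ 1 := by
          rw [hammingDist_eq_hammingNorm]
          simpa using herr a
        have h2 : hammingDist (u + err a) v ≤ 1 := by
          rw [h, hammingDist_comm, hammingDist_eq_hammingNorm]
          simpa using herr b
        omega
      subst huv
      rw [hinj (add_left_cancel h)])
  simpa [Finset.card_product, ZMod.card] using hcard

/-- A (shortened) Hamming code: a subspace of the kernel of a parity-check matrix with distinct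
nonzero columns. -/
lemma exists_linear_code {k r : ℕ} (h : k + r + 1 ≤ 2 ^ r) :
    ∃ C : Submodule (ZMod 2) (Fin (k + r) → ZMod 2),
      Module.finrank (ZMod 2) C = k ∧ ∀ x ∈ C, x ≠ 0 → 3 ≤ hammingNorm x := by
  classical
  obtain ⟨col⟩ : Nonempty (Fin (k + r) ↪ {v : Fin r → ZMod 2 // v ≠ 0}) := by
    apply Function.Embedding.nonempty_of_card_le
    rw [Fintype.card_subtype_compl]
    simp [ZMod.card]
    omega
  let H := Fintype.linearCombination (ZMod 2) (fun i => (col i : Fin r → ZMod 2))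
  have hrn := H.finrank_range_add_finrank_ker
  have hr : Module.finrank (ZMod 2) (LinearMap.range H) ≤ r := by
    simpa using Submodule.finrank_le (LinearMap.range H)
  have hk : k ≤ Module.finrank (ZMod 2) (LinearMap.ker H) := by
    simp only [Module.finrank_fintype_fun_eq_card, Fintype.card_fin] at hrn
    omega
  obtain ⟨b, hb⟩ := exists_linearIndependent_of_le_finrank hk
  have hCk := finrank_span_eq_card hb
  rw [Fintype.card_fin] at hCk
  set C := Submodule.span (ZMod 2) (Set.range b)
  refine ⟨C.map (LinearMap.ker H).subtype, ?_, ?_⟩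
  · rw [Submodule.finrank_map_subtype_eq, hCk]
  · rintro x hx hx0
    have hHx : ∑ i with x i ≠ 0, (col i : Fin r → ZMod 2) = 0 := by
      obtain ⟨y, -, rfl⟩ := hx
      have hy : ∑ i, y.1 i • (col i : Fin r → ZMod 2) = 0 := y.2
      refine Eq.trans ?_ hy
      rw [Finset.sum_filter]
      refine Finset.sum_congr rfl fun i _ => ?_
      have h01 : ∀ a : ZMod 2, a ≠ 0 → a = 1 := by decide
      by_cases hi : y.1 i = 0
      · simp [hi]
      · simp [h01 _ hi]
    by_contra hlt
    have hpos : 0 < hammingNorm x := hammingNorm_pos_iff.2 hx0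
    have hcases : hammingNorm x = 1 ∨ hammingNorm x = 2 := by omega
    unfold hammingNorm at hcases
    rcases hcases with h1 | h2
    · obtain ⟨i, hi⟩ := Finset.card_eq_one.1 h1
      rw [hi, Finset.sum_singleton] at hHx
      exact (col i).2 hHx
    · obtain ⟨i, j, hij, hs⟩ := Finset.card_eq_two.1 h2
      rw [hs, Finset.sum_pair hij] at hHx
      refine hij (col.injective (Subtype.ext ?_))
      -- In characteristic two, a vanishing sum of two columns makes them equal.
      funext t
      have h2 : ∀ a b : ZMod 2, a + b = 0 → a = b := by decide
      exact h2 _ _ (congrFun hHx t)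

lemma code_of_linear {n k : ℕ} (C : Submodule (ZMod 2) (Fin n → ZMod 2))
    (hk : Module.finrank (ZMod 2) C = k) (hC : ∀ x ∈ C, x ≠ 0 → 3 ≤ hammingNorm x) :
    ∃ D : Finset (Fin n → ZMod 2), D.card = 2 ^ k ∧
      ∀ u ∈ D, ∀ v ∈ D, u ≠ v → 3 ≤ hammingDist u v := by
  classical
  refine ⟨Finset.univ.filter (· ∈ C), ?_, ?_⟩
  · rw [← Fintype.card_subtype]
    have := Module.card_eq_pow_finrank (K := ZMod 2) (V := C)
    rw [hk, ZMod.card] at this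
    rw [← this]
  · intro u hu v hv huv
    rw [hammingDist_eq_hammingNorm]
    simp only [Finset.mem_filter, Finset.mem_univ, true_and] at hu hv
    refine hC _ (C.add_mem (C.neg_mem hu) hv) fun h => huv ?_
    exact neg_add_eq_zero.1 h

/-- `r = L + 1` satisfies `k + r + 1 ≤ 2 ^ r` and `r = L` does not, where
`L = ⌊log₂ (k + 1 + ⌊log₂ k⌋)⌋`. -/
lemma formula_bounds (k : ℕ) (hk : 0 < k) :
    k + (Nat.log 2 (k + 1 + Nat.log 2 k) + 1) + 1 ≤ 2 ^ (Nat.log 2 (k + 1 + Nat.log 2 k) + 1) ∧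
    2 ^ Nat.log 2 (k + 1 + Nat.log 2 k) < k + Nat.log 2 (k + 1 + Nat.log 2 k) + 1 := by
  have hm1 := Nat.pow_log_le_self 2 hk.ne'
  have hm2 := Nat.lt_pow_succ_log_self (b := 2) (by norm_num) k
  have hL1 := Nat.pow_log_le_self 2 (x := k + 1 + Nat.log 2 k) (by omega)
  have hL2 := Nat.lt_pow_succ_log_self (b := 2) (by norm_num) (k + 1 + Nat.log 2 k)
  have hmL : Nat.log 2 k ≤ Nat.log 2 (k + 1 + Nat.log 2 k) := Nat.log_mono_right (by omega)
  have hmp : Nat.log 2 k < 2 ^ Nat.log 2 k := Nat.lt_two_pow_self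
  have hLm : Nat.log 2 (k + 1 + Nat.log 2 k) < Nat.log 2 k + 2 := by
    apply Nat.log_lt_of_lt_pow (by omega)
    simp only [Nat.succ_eq_add_one, pow_succ] at *
    omega
  generalize Nat.log 2 (k + 1 + Nat.log 2 k) = L at *
  generalize Nat.log 2 k = m at *
  obtain rfl | rfl : L = m ∨ L = m + 1 := by omega
  all_goals
    simp only [Nat.succ_eq_add_one, pow_succ] at *
    omega

/-- `2 ^ r - r` is nondecreasing. -/
lemma two_pow_add_le {r L : ℕ} (h : r ≤ L) : 2 ^ r + L ≤ 2 ^ L + r := by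
  induction L, h using Nat.le_induction with
  | base => exact le_rfl
  | succ L _ ih =>
    have : 0 < 2 ^ L := by positivity
    rw [pow_succ]
    omega

lemma code_length_lower_bound {n k : ℕ} (hk : 0 < k) (C : Finset (Fin n → ZMod 2))
    (hcard : C.card = 2 ^ k) (hC : ∀ u ∈ C, ∀ v ∈ C, u ≠ v → 3 ≤ hammingDist u v) :
    k + 1 + Nat.log 2 (k + 1 + Nat.log 2 k) ≤ n := by
  have hb := hamming_bound C hC
  rw [hcard] at hb
  have hkn : k ≤ n := by
    refine (Nat.pow_le_pow_iff_right (a := 2) (by norm_num)).1 (le_trans ?_ hb)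
    exact Nat.le_mul_of_pos_right _ (by omega)
  obtain ⟨r, rfl⟩ := Nat.exists_eq_add_of_le hkn
  rw [pow_add] at hb
  have hr : k + r + 1 ≤ 2 ^ r := Nat.le_of_mul_le_mul_left hb (by positivity)
  by_contra hlt
  have := two_pow_add_le (r := r) (L := Nat.log 2 (k + 1 + Nat.log 2 k)) (by omega)
  have := (formula_bounds k hk).2
  omega

/-- `NL(k,1) = N(k,1) = k + 1 + ⌊log₂(k + 1 + ⌊log₂ k⌋)⌋`. Here `Nat.log 2` is the
integer part of the base-2 logarithm. -/
theorem NL_eq_N_eq_formula (k : ℕ) (hk : 0 < k) :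
    NL k 1 = N k 1 ∧ N k 1 = k + 1 + Nat.log 2 (k + 1 + Nat.log 2 k) := by
  obtain ⟨C, hCk, hC⟩ := exists_linear_code (formula_bounds k hk).1
  have hn : k + (Nat.log 2 (k + 1 + Nat.log 2 k) + 1) =
      k + 1 + Nat.log 2 (k + 1 + Nat.log 2 k) := by omega
  have hNL : NL k 1 = k + 1 + Nat.log 2 (k + 1 + Nat.log 2 k) := by
    refine le_antisymm ?_ (le_csInf ⟨_, C, hCk, hC⟩ ?_)
    · rw [← hn]
      exact Nat.sInf_le ⟨C, hCk, hC⟩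
    · rintro n ⟨C', hk', hC'⟩
      obtain ⟨D, hD, hD'⟩ := code_of_linear C' hk' hC'
      exact code_length_lower_bound hk D hD hD'
  have hN : N k 1 = k + 1 + Nat.log 2 (k + 1 + Nat.log 2 k) := by
    have hmem := code_of_linear C hCk hC
    refine le_antisymm ?_ (le_csInf ⟨_, hmem⟩ ?_)
    · rw [← hn]
      exact Nat.sInf_le hmem
    · rintro n ⟨D, hD, hD'⟩
      exact code_length_lower_bound hk D hD hD'
  exact ⟨hNL.trans hN.symm, hN⟩
end

section
/- For every integer k ≥ 1, the largest integer s satisfying 2^s − s − 1 < k equals ⌊log₂(k + 1 + ⌊log₂ k⌋)⌋. -/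
/-!
Write `L = ⌊log₂ k⌋`, so `2 ^ L ≤ k < 2 ^ (L + 1)`. Since `s + 1 ≤ 2 ^ s`, the condition on `s`
says `2 ^ s ≤ k + s`. It forces `s ≤ L + 1`, because `s ≥ L + 2` would give
`2 ^ s < 2 ^ (s - 1) + s ≤ 2 ^ s`. Hence `2 ^ s ≤ k + 1 + L`, which is the upper bound.
Conversely, `t = ⌊log₂ (k + 1 + L)⌋` is at least `L`: if `t = L` then `2 ^ t ≤ k`,
and if `t ≥ L + 1` then `2 ^ t ≤ k + 1 + L ≤ k + t`.
-/

/-- For every integer `k ≥ 1`, the largest integer `s` satisfying `2^s − s − 1 < k`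
is `⌊log₂(k + 1 + ⌊log₂ k⌋)⌋`. Here `Nat.log 2` is the integer part of the base-2
logarithm. -/
theorem greatest_s_eq_log_formula (k : ℕ) (hk : 1 ≤ k) :
    IsGreatest {s : ℕ | 2 ^ s - s - 1 < k} (Nat.log 2 (k + 1 + Nat.log 2 k)) := by
  have hL1 : 2 ^ Nat.log 2 k ≤ k := Nat.pow_log_le_self 2 (by omega)
  have hL2 : k < 2 ^ (Nat.log 2 k + 1) := Nat.lt_pow_succ_log_self (by norm_num) k
  have ht : 2 ^ Nat.log 2 (k + 1 + Nat.log 2 k) ≤ k + 1 + Nat.log 2 k :=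
    Nat.pow_log_le_self 2 (by omega)
  have hLt : Nat.log 2 k ≤ Nat.log 2 (k + 1 + Nat.log 2 k) := Nat.log_mono_right (by omega)
  constructor
  · rw [Set.mem_setOf_eq]
    rcases hLt.eq_or_lt with h | h
    · rw [← h]
      omega
    · omega
  · intro s hs
    rw [Set.mem_setOf_eq] at hs
    have hsL : s ≤ Nat.log 2 k + 1 := by
      by_contra! hlt
      obtain ⟨r, rfl⟩ : ∃ r, s = r + 1 := ⟨s - 1, by omega⟩
      have h1 : 2 ^ (Nat.log 2 k + 1) ≤ 2 ^ r := Nat.pow_le_pow_right (by norm_num) (by omega)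
      have h2 : r < 2 ^ r := Nat.lt_two_pow_self
      rw [pow_succ] at hs
      omega
    exact Nat.le_log_of_pow_le (by norm_num) (by omega)
end

section
/- Let C ⊆ F_2^n be a linear code with minimum Hamming distance at least 2e+1 (e ≥ 1). Then every coset modulo C contains at most ⌊n/(e+1)⌋ distinct vectors of Hamming weight e+1. -/
/-!
Over `F_2`, two vectors of weight `e+1` that agree in a coordinate of both supports differ in at
most `2(e+1) - 2 = 2e` places. Hence two distinct vectors of weight `e+1` in the same coset, whose
difference is a nonzero codeword, have disjoint supports. The supports of all such vectors are thus
pairwise disjoint `(e+1)`-subsets of an `n`-set, and there are at most `⌊n/(e+1)⌋` of them.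
-/

/-- Each common support coordinate is counted in both weights but, over `F_2`, cancels in the
difference. -/
theorem hammingNorm_sub_add_two_mul_le {n : ℕ} (v w : Fin n → ZMod 2) :
    hammingNorm (v - w) + 2 * (Finset.univ.filter fun i => v i ≠ 0 ∧ w i ≠ 0).card
      ≤ hammingNorm v + hammingNorm w := by
  have key : ∀ a b : ZMod 2, (if a - b ≠ 0 then 1 else 0) + 2 * (if a ≠ 0 ∧ b ≠ 0 then 1 else 0)
      ≤ (if a ≠ 0 then 1 else 0) + (if b ≠ 0 then 1 else 0) := by decide
  simp only [hammingNorm, Finset.card_filter, Finset.mul_sum, ← Finset.sum_add_distrib]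
  exact Finset.sum_le_sum fun i _ => key (v i) (w i)

/-- If `C ⊆ F_2^n` is a linear code of minimum distance at least `2e+1` (`e ≥ 1`),
then every coset `u + C` contains at most `⌊n/(e+1)⌋` vectors of Hamming weight `e+1`. -/
theorem coset_weight_succ_count {n e : ℕ} (he : 1 ≤ e)
    (C : Submodule (ZMod 2) (Fin n → ZMod 2))
    (hmin : ∀ x ∈ C, x ≠ 0 → 2 * e + 1 ≤ hammingNorm x)
    (u : Fin n → ZMod 2) :
    Set.ncard {v : Fin n → ZMod 2 | v - u ∈ C ∧ hammingNorm v = e + 1} ≤ n / (e + 1) := by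
  classical
  rw [Nat.le_div_iff_mul_le (Nat.succ_pos e), Set.ncard_eq_toFinset_card']
  set S := {v : Fin n → ZMod 2 | v - u ∈ C ∧ hammingNorm v = e + 1}.toFinset with hS
  have hmem : ∀ v ∈ S, v - u ∈ C ∧ hammingNorm v = e + 1 := fun v hv => by simpa [hS] using hv
  have hdisj : (S : Set (Fin n → ZMod 2)).PairwiseDisjoint
      fun v => Finset.univ.filter fun i => v i ≠ 0 := by
    intro v hv w hw hvw
    obtain ⟨hvC, hv1⟩ := hmem v hv
    obtain ⟨hwC, hw1⟩ := hmem w hw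
    have hC : v - w ∈ C := by simpa using C.sub_mem hvC hwC
    have h1 := hmin _ hC (sub_ne_zero.mpr hvw)
    have h2 := hammingNorm_sub_add_two_mul_le v w
    have h0 : (Finset.univ.filter fun i => v i ≠ 0 ∧ w i ≠ 0).card = 0 := by omega
    rw [Function.onFun, Finset.disjoint_iff_inter_eq_empty, ← Finset.filter_and]
    exact Finset.card_eq_zero.mp h0
  calc S.card * (e + 1) = ∑ v ∈ S, (Finset.univ.filter fun i => v i ≠ 0).card :=
        (Finset.sum_const_nat fun v hv => (hmem v hv).2).symm
    _ = (S.biUnion fun v => Finset.univ.filter fun i => v i ≠ 0).card :=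
        (Finset.card_biUnion hdisj).symm
    _ ≤ n := (Finset.card_le_univ _).trans_eq (Fintype.card_fin n)
end

section
/- Let C ⊆ F_2^n be a linear code with minimum Hamming distance at least 2e+1 (e ≥ 1). Then every coset modulo C of weight e contains at most ⌊(n−e)/(e+1)⌋ distinct vectors of Hamming weight e+1. -/
/-!
The coset contains a vector `x` of weight `e`. For binary vectors,
`w(v - w) + 2 |supp v ∩ supp w| = w(v) + w(w)` (`hammingNorm_sub_add_two_mul`). The difference of
two distinct vectors of the coset is a nonzero codeword, hence has weight at least `2e + 1`; so if
the two weights add up to at most `2e + 2`, then the supports share no coordinate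
(`disjoint_binarySupp`). Hence the vectors of weight `e + 1` in the coset have pairwise disjoint
supports, all contained in the `n - e` coordinates outside the support of `x`, and there are at most
`(n - e) / (e + 1)` of them.
-/

/-- The weight of the coset `u + C`: the minimum Hamming weight of a vector in `u + C`. -/
noncomputable def cosetWeight {n : ℕ} (C : Submodule (ZMod 2) (Fin n → ZMod 2))
    (u : Fin n → ZMod 2) : ℕ :=
  sInf {w : ℕ | ∃ x : Fin n → ZMod 2, x - u ∈ C ∧ hammingNorm x = w}

/-- The support of a binary vector, as a finite set of coordinates. -/
def binarySupp {n : ℕ} (v : Fin n → ZMod 2) : Finset (Fin n) :=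
  Finset.univ.filter fun i => v i ≠ 0

theorem card_binarySupp {n : ℕ} (v : Fin n → ZMod 2) :
    (binarySupp v).card = hammingNorm v := rfl

theorem binarySupp_sub {n : ℕ} (v w : Fin n → ZMod 2) :
    binarySupp (v - w) = symmDiff (binarySupp v) (binarySupp w) := by
  ext i
  simp only [binarySupp, Finset.mem_symmDiff, Finset.mem_filter, Finset.mem_univ, true_and,
    Pi.sub_apply]
  generalize v i = a
  generalize w i = b
  revert a b
  decide

theorem hammingNorm_sub_add_two_mul {n : ℕ} (v w : Fin n → ZMod 2) :
    hammingNorm (v - w) + 2 * (binarySupp v ∩ binarySupp w).card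
      = hammingNorm v + hammingNorm w := by
  simp only [← card_binarySupp, binarySupp_sub]
  have h : (symmDiff (binarySupp v) (binarySupp w)).card
      = (binarySupp v \ binarySupp w).card + (binarySupp w \ binarySupp v).card :=
    Finset.card_union_of_disjoint disjoint_sdiff_sdiff
  have h₁ := Finset.card_sdiff_add_card_inter (binarySupp v) (binarySupp w)
  have h₂ := Finset.card_sdiff_add_card_inter (binarySupp w) (binarySupp v)
  rw [Finset.inter_comm] at h₂
  omega

theorem disjoint_binarySupp {n e : ℕ} {v w : Fin n → ZMod 2}
    (hd : 2 * e + 1 ≤ hammingNorm (v - w)) (hs : hammingNorm v + hammingNorm w ≤ 2 * e + 2) :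
    Disjoint (binarySupp v) (binarySupp w) := by
  rw [Finset.disjoint_iff_inter_eq_empty, ← Finset.card_eq_zero]
  have := hammingNorm_sub_add_two_mul v w
  omega

/-- If `C ⊆ F_2^n` is a linear code of minimum distance at least `2e+1` (`e ≥ 1`),
then every coset of weight `e` contains at most `⌊(n-e)/(e+1)⌋` vectors of Hamming
weight `e+1`. -/
theorem weight_e_coset_weight_succ_count {n e : ℕ} (he : 1 ≤ e)
    (C : Submodule (ZMod 2) (Fin n → ZMod 2))
    (hmin : ∀ x ∈ C, x ≠ 0 → 2 * e + 1 ≤ hammingNorm x)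
    (u : Fin n → ZMod 2) (hcw : cosetWeight C u = e) :
    Set.ncard {v : Fin n → ZMod 2 | v - u ∈ C ∧ hammingNorm v = e + 1}
      ≤ (n - e) / (e + 1) := by
  classical
  obtain ⟨x, hxC, hxe⟩ : ∃ x : Fin n → ZMod 2, x - u ∈ C ∧ hammingNorm x = e := by
    have h := Nat.sInf_mem
      (s := {w : ℕ | ∃ x : Fin n → ZMod 2, x - u ∈ C ∧ hammingNorm x = w})
      ⟨_, u, by simp, rfl⟩
    rw [← hcw]
    exact h
  have hdist : ∀ v w : Fin n → ZMod 2, v - u ∈ C → w - u ∈ C → v ≠ w →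
      2 * e + 1 ≤ hammingNorm (v - w) := fun v w hv hw hne =>
    hmin _ (by simpa using C.sub_mem hv hw) (sub_ne_zero.mpr hne)
  rw [Set.ncard_eq_toFinset_card']
  set S := {v : Fin n → ZMod 2 | v - u ∈ C ∧ hammingNorm v = e + 1}.toFinset with hS
  have hmem : ∀ v ∈ S, v - u ∈ C ∧ hammingNorm v = e + 1 := fun v hv => by simpa [hS] using hv
  have hcard : (S.biUnion binarySupp).card = S.card * (e + 1) := by
    rw [Finset.card_biUnion]
    · exact Finset.sum_const_nat fun v hv => (hmem v hv).2
    · intro v hv w hw hne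
      obtain ⟨hvC, hve⟩ := hmem v hv
      obtain ⟨hwC, hwe⟩ := hmem w hw
      exact disjoint_binarySupp (hdist v w hvC hwC hne) (by omega)
  have hdisj : Disjoint (S.biUnion binarySupp) (binarySupp x) := by
    rw [Finset.disjoint_biUnion_left]
    intro v hv
    obtain ⟨hvC, hve⟩ := hmem v hv
    refine disjoint_binarySupp (hdist v x hvC hxC ?_) (by omega)
    rintro rfl
    omega
  have hle := Finset.card_le_univ (S.biUnion binarySupp ∪ binarySupp x)
  rw [Finset.card_union_of_disjoint hdisj, hcard, card_binarySupp, hxe, Fintype.card_fin] at hle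
  rw [Nat.le_div_iff_mul_le (by omega : 0 < e + 1)]
  omega
end

section
/- Let C ⊆ F_2^n be a k-dimensional linear code with minimum Hamming distance at least 2e+1 (e ≥ 1). Then ⌊n/(e+1)⌋ · ( 2^{n−k} − Σ_{i=0}^{e} C(n,i) ) + ⌊(n−e)/(e+1)⌋ · C(n,e) ≥ C(n,e+1), where C(n,i) denotes the binomial coefficient. -/
/-!
Identify binary vectors with subsets of `Fin n` (their supports) and let `σ` send a subset to its
coset modulo `C`. Two distinct sets in the same coset have symmetric difference of size at least
`2e+1`; this is the only property of `σ` used in the count. It forces sets of size at most `e` to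
lie in different cosets, so exactly `∑_{i ≤ e} C(n,i)` cosets (the *light* ones) contain a set of
size at most `e`. The `C(n,e+1)` sets of size `e+1` are counted coset by coset:

* those in one coset are pairwise disjoint, since their symmetric differences have even size at
  least `2e+1`, hence size `2e+2`. So any coset holds at most `⌊n/(e+1)⌋` of them;
* if the coset also contains a set of size `e`, that set is disjoint from all of them, which
  leaves room for at most `⌊(n-e)/(e+1)⌋`;
* if the coset contains a set of size less than `e`, it contains no set of size `e+1`.

Summing over the non-light cosets, and over the `C(n,e)` light cosets containing a set of size
`e`, gives the inequality (`card_count`).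
-/

open Finset in
lemma card_symmDiff_add {α : Type*} [DecidableEq α] (s t : Finset α) :
    #(symmDiff s t) + 2 * #(s ∩ t) = #s + #t := by
  have h1 := card_sdiff_add_card_inter s t
  have h2 := card_sdiff_add_card_inter t s
  have h3 : #(symmDiff s t) = #(s \ t) + #(t \ s) :=
    card_union_of_disjoint disjoint_sdiff_sdiff
  rw [inter_comm t s] at h2
  omega

open Finset in
lemma card_le_div_of_pairwiseDisjoint {α : Type*} [DecidableEq α] {m : ℕ}
    (F : Finset (Finset α)) (U : Finset α) (hm : ∀ s ∈ F, #s = m + 1) (hU : ∀ s ∈ F, s ⊆ U)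
    (hF : ∀ s ∈ F, ∀ t ∈ F, s ≠ t → Disjoint s t) :
    #F ≤ #U / (m + 1) := by
  rw [Nat.le_div_iff_mul_le (Nat.succ_pos m)]
  have h : #(F.biUnion id) = ∑ s ∈ F, #s := card_biUnion hF
  rw [sum_congr rfl hm, sum_const, smul_eq_mul] at h
  rw [← h]
  exact card_le_card (biUnion_subset.2 hU)

open Finset in
/-- The combinatorial core: `σ` is any colouring of the subsets of `Fin n` whose colour classes
have minimum distance at least `2e+1`, with no linear structure assumed. -/
lemma card_count {n e : ℕ} {Q : Type*} [Fintype Q] [DecidableEq Q] (σ : Finset (Fin n) → Q)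
    (hσ : ∀ s t, σ s = σ t → s ≠ t → 2 * e + 1 ≤ #(symmDiff s t)) :
    (n.choose (e + 1) : ℤ) ≤
      ((n / (e + 1) : ℕ) : ℤ) * ((Fintype.card Q : ℤ) - ∑ i ∈ range (e + 1), (n.choose i : ℤ))
        + (((n - e) / (e + 1) : ℕ) : ℤ) * (n.choose e : ℤ) := by
  set S : Finset (Finset (Fin n)) := (range (e + 1)).biUnion fun i => powersetCard i univ with hS
  have memS (s : Finset (Fin n)) : s ∈ S ↔ #s ≤ e := by
    simp [hS, mem_powersetCard]
  have cardS : #S = ∑ i ∈ range (e + 1), n.choose i := by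
    rw [hS, card_biUnion]
    · simp
    · intro i _ j _ hij
      exact pairwise_disjoint_powersetCard _ hij
  have inj : Set.InjOn σ S := by
    intro s hs t ht hst
    by_contra hne
    have h1 := hσ s t hst hne
    have h2 := card_symmDiff_add s t
    have h3 := (memS s).1 hs
    have h4 := (memS t).1 ht
    omega
  set L := S.image σ with hL
  have cardL : #L = ∑ i ∈ range (e + 1), n.choose i := by
    rw [hL, card_image_of_injOn inj, cardS]
  set P : Finset (Finset (Fin n)) := powersetCard e univ with hP
  set A := P.image σ with hA
  have cardA : #A ≤ n.choose e := card_image_le.trans (by simp [hP])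
  have hAL : A ⊆ L := image_subset_image fun s hs => by
    rw [memS]; exact (mem_powersetCard.1 hs).2.le
  set T : Finset (Finset (Fin n)) := powersetCard (e + 1) univ with hT
  have memT (s : Finset (Fin n)) : s ∈ T ↔ #s = e + 1 := by simp [hT]
  have cardT : #T = n.choose (e + 1) := by simp [hT]
  have disj (q : Q) : ∀ s ∈ T.filter (σ · = q), ∀ t ∈ T.filter (σ · = q), s ≠ t →
      Disjoint s t := by
    intro s hs t ht hne
    rw [mem_filter, memT] at hs ht
    have h1 := hσ s t (hs.2.trans ht.2.symm) hne
    have h2 := card_symmDiff_add s t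
    rw [disjoint_iff_inter_eq_empty, ← card_eq_zero]
    omega
  have fib_all (q : Q) : #(T.filter (σ · = q)) ≤ n / (e + 1) := by
    simpa using card_le_div_of_pairwiseDisjoint (m := e) _ univ
      (fun s hs => (memT s).1 (mem_filter.1 hs).1) (fun s _ => subset_univ s) (disj q)
  -- A set of size `e + 1` sharing its coset with a set of size at most `e` is at distance exactly
  -- `2e + 1` from it, so the smaller set has size `e` and the two are disjoint.
  have meet (s v : Finset (Fin n)) (hs : #s = e + 1) (hv : #v ≤ e) (h : σ s = σ v) :
      #v = e ∧ Disjoint s v := by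
    have h1 := hσ s v h (by rintro rfl; omega)
    have h2 := card_symmDiff_add s v
    rw [disjoint_iff_inter_eq_empty, ← card_eq_zero]
    omega
  have fib_A (q : Q) (hq : q ∈ A) : #(T.filter (σ · = q)) ≤ (n - e) / (e + 1) := by
    obtain ⟨v, hv, rfl⟩ := mem_image.1 hq
    have hv' : #v = e := (mem_powersetCard.1 hv).2
    have := card_le_div_of_pairwiseDisjoint (m := e) _ vᶜ
      (fun s hs => (memT s).1 (mem_filter.1 hs).1) (fun s hs => ?_) (disj (σ v))
    · simpa [card_compl, hv'] using this
    · rw [mem_filter, memT] at hs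
      exact (meet s v hs.1 hv'.le hs.2).2.le_compl_right
  have fib_L (q : Q) (hq : q ∈ L \ A) : #(T.filter (σ · = q)) = 0 := by
    rw [mem_sdiff] at hq
    obtain ⟨v, hv, rfl⟩ := mem_image.1 hq.1
    rw [card_eq_zero, filter_eq_empty_iff]
    intro s hs hsv
    exact hq.2 (mem_image_of_mem σ (mem_powersetCard.2
      ⟨subset_univ _, (meet s v ((memT s).1 hs) ((memS v).1 hv) hsv).1⟩))
  have total : #T = ∑ q ∈ Lᶜ, #(T.filter (σ · = q)) + ∑ q ∈ A, #(T.filter (σ · = q)) := by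
    rw [card_eq_sum_card_fiberwise (f := σ) (t := univ) (fun _ _ => by simp),
      ← sum_compl_add_sum L, ← sum_sdiff hAL, sum_eq_zero fib_L, zero_add]
  have b1 := sum_le_card_nsmul Lᶜ _ _ fun q _ => fib_all q
  have b2 := sum_le_card_nsmul A _ _ fib_A
  have hc : #Lᶜ + #L = Fintype.card Q := card_compl_add_card L
  have main : n.choose (e + 1) ≤ n / (e + 1) * #Lᶜ + (n - e) / (e + 1) * n.choose e := by
    rw [← cardT, total]
    refine add_le_add (b1.trans (by rw [smul_eq_mul, mul_comm])) (b2.trans ?_)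
    rw [smul_eq_mul, mul_comm]
    exact Nat.mul_le_mul_left _ cardA
  have hc' : (Fintype.card Q : ℤ) - ∑ i ∈ range (e + 1), (n.choose i : ℤ) = (#Lᶜ : ℕ) := by
    rw [← hc, cardL]; push_cast; ring
  rw [hc']
  exact_mod_cast main

/-- Theorem (coset-counting inequality): for any linear `[n,k,2e+1]₂` code (`e ≥ 1`),
`⌊n/(e+1)⌋ · (2^(n-k) − Σ_{i=0}^{e} C(n,i)) + ⌊(n-e)/(e+1)⌋ · C(n,e) ≥ C(n,e+1)`,
as an inequality of integers. -/
theorem coset_counting_inequality {n k e : ℕ} (he : 1 ≤ e)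
    (C : Submodule (ZMod 2) (Fin n → ZMod 2))
    (hdim : Module.finrank (ZMod 2) C = k)
    (hmin : ∀ x ∈ C, x ≠ 0 → 2 * e + 1 ≤ hammingNorm x) :
    ((n.choose (e + 1) : ℤ)) ≤
      ((n / (e + 1) : ℕ) : ℤ) *
          ((2 : ℤ) ^ (n - k) - ∑ i ∈ Finset.range (e + 1), (n.choose i : ℤ))
        + (((n - e) / (e + 1) : ℕ) : ℤ) * (n.choose e : ℤ) := by
  classical
  let ind (s : Finset (Fin n)) : Fin n → ZMod 2 := fun i => if i ∈ s then 1 else 0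
  have : Fintype ((Fin n → ZMod 2) ⧸ C) := Fintype.ofFinite _
  have hcard : Fintype.card ((Fin n → ZMod 2) ⧸ C) = 2 ^ (n - k) := by
    rw [Module.card_eq_pow_finrank (K := ZMod 2), ZMod.card, Submodule.finrank_quotient, hdim]
    simp
  have key := card_count (n := n) (e := e) (fun s => (Submodule.Quotient.mk (ind s) : _ ⧸ C)) ?_
  · rw [hcard] at key
    exact_mod_cast key
  · intro s t hst hne
    have hnorm : hammingNorm (ind s - ind t) = (symmDiff s t).card := by
      unfold hammingNorm
      congr 1
      ext i
      by_cases h1 : i ∈ s <;> by_cases h2 : i ∈ t <;>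
        simp [ind, h1, h2, Finset.mem_symmDiff]
    rw [← hnorm]
    refine hmin _ ((Submodule.Quotient.eq C).1 hst) fun h0 => hne ?_
    rw [h0, hammingNorm_zero] at hnorm
    exact symmDiff_eq_bot.1 (Finset.card_eq_zero.1 hnorm.symm)
end
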